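/- For every integer ℓ ≥ 4 and every integer n ≥ 10^{10}·ℓ, every oriented graph G on n vertices with minimum semidegree δ⁰(G) ≥ ⌊n/3⌋ + 1 contains a directed cycle of length exactly ℓ. -/

import Mathlib

/-- The outdegree of a vertex `x` in the digraph with adjacency relation `G`. -/
noncomputable def outDeg {V : Type*} (G : V → V → Prop) (x : V) : ℕ :=
  Nat.card {y : V // G x y}

/-- The indegree of a vertex `x` in the digraph with adjacency relation `G`. -/
noncomputable def inDeg {V : Type*} (G : V → V → Prop) (x : V) : ℕ :=
  Nat.card {y : V // G y x}

/-- An oriented graph: no loops and no 2-cycles. -/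
def IsOriented {V : Type*} (G : V → V → Prop) : Prop :=
  ∀ x y : V, G x y → ¬ G y x

section ShortCycles

open Finset Function
open scoped Classical

variable {V : Type*} {G : V → V → Prop}

theorem IsOriented.flip (hor : IsOriented G) : IsOriented (flip G) :=
  fun x y hxy hyx => hor x y hyx hxy

theorem IsOriented.ne (hor : IsOriented G) {x y : V} (h : G x y) : x ≠ y := by
  rintro rfl
  exact hor x x h h

/-- Some vertex of a nonempty set in an oriented graph sends edges to fewer than half of the set. -/
theorem IsOriented.exists_two_mul_card_out_lt (hor : IsOriented G) {T : Finset V}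
    (hT : T.Nonempty) : ∃ v ∈ T, 2 * #{w ∈ T | G v w} < #T := by
  by_contra! h
  have hdeg : ∀ v ∈ T, #{w ∈ T | G v w} + #{w ∈ T | G w v} < #T := by
    intro v hv
    rw [← card_union_of_disjoint (disjoint_filter.2 fun w _ => hor v w)]
    refine card_lt_card ⟨union_subset (filter_subset _ _) (filter_subset _ _), fun hsub => ?_⟩
    have hvv := hsub hv
    simp only [mem_union, mem_filter] at hvv
    exact hor v v (by tauto) (by tauto)
  have hswap : ∑ v ∈ T, #{w ∈ T | G v w} = ∑ v ∈ T, #{w ∈ T | G w v} :=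
    sum_card_bipartiteAbove_eq_sum_card_bipartiteBelow G
  have hlow := sum_le_sum h
  have hupp := sum_lt_sum_of_nonempty hT hdeg
  rw [sum_add_distrib] at hupp
  rw [← mul_sum] at hlow
  omega

/-- The walk given by `p 0, …, p m` is a directed path. -/
def IsDiPath (G : V → V → Prop) (p : ℕ → V) (m : ℕ) : Prop :=
  (∀ i < m, G (p i) (p (i + 1))) ∧ Set.InjOn p (Set.Iic m)

theorem IsDiPath.extend {p : ℕ → V} {m : ℕ} (hp : IsDiPath G p m) {z : V} (hz : G (p m) z)
    (hne : ∀ i ≤ m, p i ≠ z) :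
    ∃ q : ℕ → V, IsDiPath G q (m + 1) ∧ q (m + 1) = z ∧ ∀ i ≤ m, q i = p i := by
  have hq : ∀ i ≤ m, update p (m + 1) z i = p i := fun i hi => update_of_ne (by omega) _ _
  have hqz : update p (m + 1) z (m + 1) = z := update_self ..
  refine ⟨update p (m + 1) z, ⟨fun i hi => ?_, fun i hi j hj hij => ?_⟩, hqz, hq⟩
  · rcases Nat.lt_succ_iff_lt_or_eq.1 hi with h | rfl
    · rw [hq i (by omega), hq (i + 1) (by omega)]
      exact hp.1 i h
    · rwa [hq i le_rfl, hqz]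
  · rcases Nat.le_succ_iff.1 hi with hi | rfl <;> rcases Nat.le_succ_iff.1 hj with hj | rfl
    · rw [hq i hi, hq j hj] at hij
      exact hp.2 hi hj hij
    · rw [hq i hi, hqz] at hij
      exact absurd hij (hne i hi)
    · rw [hq j hj, hqz] at hij
      exact absurd hij.symm (hne j hj)
    · rfl

theorem IsDiPath.exists_cycle {p : ℕ → V} {m : ℕ} (hp : IsDiPath G p m) (hm : m ≠ 0)
    (hclose : G (p m) (p 0)) :
    ∃ g : ZMod (m + 1) → V, Injective g ∧ ∀ i, G (g i) (g (i + 1)) := by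
  refine ⟨fun i => p i.val, fun i j hij => ?_, fun i => ?_⟩
  · exact ZMod.val_injective _ (hp.2 (Nat.lt_succ_iff.1 i.val_lt) (Nat.lt_succ_iff.1 j.val_lt) hij)
  · have hval : (i + 1).val = (i.val + 1) % (m + 1) := by
      rw [ZMod.val_add, ZMod.val_one'' (by omega)]
    rcases Nat.lt_succ_iff_lt_or_eq.1 i.val_lt with h | h
    · simp only [hval, Nat.mod_eq_of_lt (Nat.succ_lt_succ h)]
      exact hp.1 _ h
    · simp only [hval, h, Nat.mod_self]
      exact hclose

/-- A path avoiding the inner vertices of a walk of length four closes up to a cycle. -/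
theorem IsDiPath.exists_cycle_of_walk (hor : IsOriented G) {p : ℕ → V} {m : ℕ}
    (hp : IsDiPath G p m) {a b c : V} (ha : G (p m) a) (hab : G a b) (hbc : G b c)
    (hc : G c (p 0)) (havoid : ∀ i ≤ m, p i ≠ a ∧ p i ≠ b ∧ p i ≠ c) :
    ∃ g : ZMod (m + 4) → V, Injective g ∧ ∀ i, G (g i) (g (i + 1)) := by
  have hac : a ≠ c := fun h => hor a b hab (h ▸ hbc)
  obtain ⟨q, hq, hqa, hqp⟩ := hp.extend ha fun i hi => (havoid i hi).1
  have hq' : ∀ i ≤ m + 1, q i ≠ b ∧ q i ≠ c := by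
    intro i hi
    rcases Nat.le_succ_iff.1 hi with hi | rfl
    · rw [hqp i hi]
      exact (havoid i hi).2
    · rw [hqa]
      exact ⟨hor.ne hab, hac⟩
  obtain ⟨r, hr, hrb, hrq⟩ := hq.extend (hqa ▸ hab) fun i hi => (hq' i hi).1
  have hr' : ∀ i ≤ m + 2, r i ≠ c := by
    intro i hi
    rcases Nat.le_succ_iff.1 hi with hi | rfl
    · rw [hrq i hi]
      exact (hq' i hi).2
    · rw [hrb]
      exact hor.ne hbc
  obtain ⟨s, hs, hsc, hsr⟩ := hr.extend (hrb ▸ hbc) hr'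
  refine hs.exists_cycle (by omega) ?_
  rwa [hsc, hsr 0 (by omega), hrq 0 (by omega), hqp 0 (by omega)]

variable [Fintype V]

/-- The set of outneighbours of `x`; inneighbours are outneighbours in `flip G`. -/
noncomputable def outNbrs (G : V → V → Prop) (x : V) : Finset V := {y | G x y}

theorem mem_outNbrs {x y : V} : y ∈ outNbrs G x ↔ G x y := by simp [outNbrs]

theorem outDeg_eq_card_outNbrs (x : V) : outDeg G x = #(outNbrs G x) := by
  rw [outDeg, outNbrs, Nat.card_eq_fintype_card, Fintype.card_subtype]

theorem inDeg_eq_card_outNbrs_flip (x : V) : inDeg G x = #(outNbrs (flip G) x) :=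
  outDeg_eq_card_outNbrs (G := flip G) x

/-- If the out-neighbourhoods of `X` lie in `S`, no edge goes from `S` to `Y`, and `X` spans an
edge, then `S` has many vertices outside `X ∪ Y`. -/
theorem card_le_card_sdiff_union (hor : IsOriented G) {d : ℕ} (hout : ∀ x, d ≤ #(outNbrs G x))
    {X Y S : Finset V} (hXS : ∀ a ∈ X, ∀ b, G a b → b ∈ S) (hSY : ∀ b ∈ S, ∀ c ∈ Y, ¬ G b c)
    (hX : ∃ u ∈ X, ∃ v ∈ X, G u v) :
    2 * d + 1 ≤ 2 * #(S \ (X ∪ Y)) + #(X \ Y) ∨ d ≤ #(S \ (X ∪ Y)) := by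
  set T := (S ∩ X) \ Y with hTdef
  have hsplit : ∀ v ∈ S ∩ X, outNbrs G v ⊆ {w ∈ T | G v w} ∪ S \ (X ∪ Y) := by
    intro v hv w hw
    rw [mem_outNbrs] at hw
    rw [mem_inter] at hv
    have hwS := hXS v hv.2 w hw
    have hwY : w ∉ Y := fun h => hSY v hv.1 w h hw
    simp only [hTdef, mem_union, mem_filter, mem_sdiff, mem_inter]
    tauto
  have hcard : ∀ v ∈ S ∩ X, d ≤ #{w ∈ T | G v w} + #(S \ (X ∪ Y)) := fun v hv =>
    (hout v).trans ((card_le_card (hsplit v hv)).trans (card_union_le _ _))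
  rcases T.eq_empty_or_nonempty with hT | hT
  · right
    obtain ⟨u, hu, v, hv, huv⟩ := hX
    simpa [hT] using hcard v (mem_inter.2 ⟨hXS u hu v huv, hv⟩)
  · left
    obtain ⟨v, hv, hlt⟩ := hor.exists_two_mul_card_out_lt hT
    have hle := hcard v (mem_sdiff.1 hv).1
    have hTX : #T ≤ #(X \ Y) := card_le_card (sdiff_subset_sdiff inter_subset_right subset_rfl)
    omega

/-- In an oriented graph of minimum semidegree `d > n / 3`, there is a path of length two between
any two sets of size `d - 1` which both span an edge, except perhaps if the sets coincide. -/
theorem exists_path_two_between (hor : IsOriented G) {d : ℕ} (hd : Fintype.card V < 3 * d)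
    (hout : ∀ x, d ≤ #(outNbrs G x)) (hin : ∀ x, d ≤ #(outNbrs (flip G) x)) {X Y : Finset V}
    (hXcard : d ≤ #X + 1) (hYcard : d ≤ #Y + 1) (hX : ∃ u ∈ X, ∃ v ∈ X, G u v)
    (hY : ∃ u ∈ Y, ∃ v ∈ Y, G u v) (hXY : X = Y → d ≤ #X) :
    ∃ a ∈ X, ∃ b, ∃ c ∈ Y, G a b ∧ G b c := by
  by_contra! h
  set S : Finset V := {b | ∃ a ∈ X, G a b} with hS
  set R : Finset V := {b | ∃ c ∈ Y, G b c} with hR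
  have hSR : Disjoint S R := by
    refine disjoint_filter.2 ?_
    rintro b - ⟨a, ha, hab⟩ ⟨c, hc, hbc⟩
    exact h a ha b c hc hab hbc
  have h₁ := card_le_card_sdiff_union hor hout (X := X) (Y := Y) (S := S)
    (fun a ha b hab => by simpa [hS] using ⟨a, ha, hab⟩)
    (fun b hb c hc hbc => by
      obtain ⟨a, ha, hab⟩ : ∃ a ∈ X, G a b := by simpa [hS] using hb
      exact h a ha b c hc hab hbc) hX
  have h₂ := card_le_card_sdiff_union hor.flip hin (X := Y) (Y := X) (S := R)
    (fun c hc b hbc => by simpa [hR] using ⟨c, hc, hbc⟩)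
    (fun b hb a ha hab => by
      obtain ⟨c, hc, hbc⟩ : ∃ c ∈ Y, G b c := by simpa [hR] using hb
      exact h a ha b c hc hab hbc)
    (by obtain ⟨u, hu, v, hv, huv⟩ := hY; exact ⟨v, hv, u, hu, huv⟩)
  rw [union_comm Y X] at h₂
  have htotal : #(X ∪ Y) + #(S \ (X ∪ Y)) + #(R \ (X ∪ Y)) ≤ Fintype.card V := by
    rw [← card_union_of_disjoint disjoint_sdiff, ← card_union_of_disjoint]
    · exact card_le_univ _
    · rw [disjoint_union_left]
      exact ⟨disjoint_sdiff, hSR.mono sdiff_subset sdiff_subset⟩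
  have hu₁ : #(X ∪ Y) = #X + #(Y \ X) := by
    rw [← union_sdiff_self_eq_union, card_union_of_disjoint disjoint_sdiff]
  have hu₂ : #(X ∪ Y) = #Y + #(X \ Y) := by
    rw [union_comm, ← union_sdiff_self_eq_union, card_union_of_disjoint disjoint_sdiff]
  have heq : #(X \ Y) = 0 → #(Y \ X) = 0 → d ≤ #X := by
    intro e₁ e₂
    rw [card_eq_zero, sdiff_eq_empty_iff_subset] at e₁ e₂
    exact hXY (e₁.antisymm e₂)
  omega

/-- A vertex of an oriented graph of minimum semidegree `d > n / 3` has a neighbour in every set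
of size `d`. -/
theorem exists_adj_of_card (hor : IsOriented G) {d : ℕ} (hd : Fintype.card V < 3 * d)
    (hout : ∀ x, d ≤ #(outNbrs G x)) (hin : ∀ x, d ≤ #(outNbrs (flip G) x)) {Z : Finset V}
    (hZ : d ≤ #Z) (v : V) : ∃ w ∈ Z, G v w ∨ G w v := by
  by_contra! h
  have h₁ : Disjoint (outNbrs G v) (outNbrs (flip G) v) :=
    disjoint_left.2 fun w hw hw' => hor v w (mem_outNbrs.1 hw) (mem_outNbrs (G := flip G).1 hw')
  have h₂ : Disjoint (outNbrs G v ∪ outNbrs (flip G) v) Z := by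
    refine disjoint_left.2 fun w hw hwZ => ?_
    rw [mem_union, mem_outNbrs, mem_outNbrs] at hw
    exact hw.elim (h w hwZ).1 (h w hwZ).2
  have hle := card_le_univ (outNbrs G v ∪ outNbrs (flip G) v ∪ Z)
  rw [card_union_of_disjoint h₂, card_union_of_disjoint h₁] at hle
  have := hout v
  have := hin v
  omega

/-- At most one vertex can be removed from an out-neighbourhood to leave an independent set. -/
theorem eq_of_erase_independent (hor : IsOriented G) {d : ℕ} (hd : Fintype.card V < 3 * d)
    (hd3 : 3 ≤ d) (hout : ∀ x, d ≤ #(outNbrs G x)) (hin : ∀ x, d ≤ #(outNbrs (flip G) x))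
    {x y y' : V} (hy : ∀ u ∈ (outNbrs G x).erase y, ∀ v ∈ (outNbrs G x).erase y, ¬ G u v)
    (hy' : ∀ u ∈ (outNbrs G x).erase y', ∀ v ∈ (outNbrs G x).erase y', ¬ G u v) : y = y' := by
  by_contra hne
  obtain ⟨v, hv, hvy⟩ : ∃ v ∈ outNbrs G x, v ∉ ({y, y'} : Finset V) :=
    exists_mem_notMem_of_card_lt_card (card_le_two.trans_lt (hd3.trans (hout x)))
  obtain ⟨w, hw, hvw⟩ := exists_adj_of_card hor hd hout hin (hout x) v
  simp only [mem_insert, mem_singleton, not_or] at hvy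
  simp only [mem_erase] at hy hy'
  by_cases hwy : w = y
  · have hwy' : w ≠ y' := by rwa [hwy]
    rcases hvw with hvw | hvw
    · exact hy' v ⟨hvy.2, hv⟩ w ⟨hwy', hw⟩ hvw
    · exact hy' w ⟨hwy', hw⟩ v ⟨hvy.2, hv⟩ hvw
  · rcases hvw with hvw | hvw
    · exact hy v ⟨hvy.1, hv⟩ w ⟨hwy, hw⟩ hvw
    · exact hy w ⟨hwy, hw⟩ v ⟨hvy.1, hv⟩ hvw

/-- The vertices that can be reached from `y` by walks of length `j + 1` having at least `K`
choices for each vertex but the first one, when chosen backwards. -/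
noncomputable def robustReach (G : V → V → Prop) (K : ℕ) (y : V) : ℕ → Finset V
  | 0 => outNbrs G y
  | j + 1 => {v | K ≤ #{u ∈ robustReach G K y j | G u v}}

theorem card_le_six_mul_card_robustReach {d K : ℕ} (hd : Fintype.card V < 3 * d)
    (hK : 36 * K ≤ Fintype.card V) (hout : ∀ x, d ≤ #(outNbrs G x)) (y : V) (j : ℕ) :
    Fintype.card V ≤ 6 * #(robustReach G K y j) := by
  induction j with
  | zero =>
    have := hout y
    rw [robustReach]
    omega
  | succ j ih =>
    set A := robustReach G K y j
    set B := robustReach G K y (j + 1) with hB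
    have hswap : ∑ u ∈ A, #(outNbrs G u) = ∑ v : V, #{u ∈ A | G u v} :=
      sum_card_bipartiteAbove_eq_sum_card_bipartiteBelow G
    have hlow : #A * d ≤ ∑ u ∈ A, #(outNbrs G u) := by
      simpa using card_nsmul_le_sum A _ d fun u _ => hout u
    have hupp : ∑ v : V, #{u ∈ A | G u v} ≤ #B * #A + Fintype.card V * K := by
      rw [← sum_add_sum_compl B]
      refine add_le_add ?_ ?_
      · simpa using sum_le_card_nsmul B _ #A fun v _ => card_filter_le _ _
      · refine (sum_le_card_nsmul Bᶜ _ K fun v hv => ?_).trans ?_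
        · rw [mem_compl, hB, robustReach, mem_filter] at hv
          have hlt : ¬ K ≤ #{u ∈ A | G u v} := fun h => hv ⟨mem_univ v, h⟩
          omega
        · exact Nat.mul_le_mul_right K (card_le_univ _)
    rcases Nat.eq_zero_or_pos #A with hA | hA
    · omega
    · have hmul : #A * d ≤ #A * (#B + 6 * K) := by nlinarith
      have := Nat.le_of_mul_le_mul_left hmul hA
      omega

theorem exists_isDiPath_of_mem_robustReach (hor : IsOriented G) {K : ℕ} {y : V} {j : ℕ} {x : V}
    (hx : x ∈ robustReach G K y j) (hxy : x ≠ y) {F : Finset V} (hF : #F + j + 2 ≤ K)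
    (hxF : x ∉ F) (hyF : y ∉ F) :
    ∃ p : ℕ → V, IsDiPath G p (j + 1) ∧ p 0 = y ∧ p (j + 1) = x ∧ ∀ i ≤ j + 1, p i ∉ F := by
  induction j generalizing x F with
  | zero =>
    have hconst : IsDiPath G (fun _ => y) 0 :=
      ⟨fun i hi => absurd hi (by omega), fun i hi j hj _ => by
        simp only [Set.mem_Iic] at hi hj
        omega⟩
    obtain ⟨p, hp, hpx, hpy⟩ := hconst.extend (mem_outNbrs.1 hx) fun _ _ => hxy.symm
    refine ⟨p, hp, hpy 0 le_rfl, hpx, fun i hi => ?_⟩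
    rcases Nat.le_succ_iff.1 hi with hi | rfl
    · rwa [hpy i hi]
    · rwa [hpx]
  | succ j ih =>
    rw [robustReach, mem_filter] at hx
    obtain ⟨z, hz, hzF⟩ : ∃ z ∈ ({u ∈ robustReach G K y j | G u x} : Finset V),
        z ∉ insert y F := by
      refine exists_mem_notMem_of_card_lt_card ((card_insert_le _ _).trans_lt ?_)
      omega
    rw [mem_filter] at hz
    rw [mem_insert, not_or] at hzF
    obtain ⟨p, hp, hpy, hpz, hpF⟩ := ih hz.1 hzF.1 (F := insert x F)
      (by have := card_insert_le x F; omega)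
      (by simpa [hzF.2] using hor.ne hz.2) (by simpa [hyF] using hxy.symm)
    simp only [mem_insert, not_or] at hpF
    obtain ⟨q, hq, hqx, hqp⟩ := hp.extend (hpz ▸ hz.2) fun i hi => (hpF i hi).1
    refine ⟨q, hq, (hqp 0 (by omega)).trans hpy, hqx, fun i hi => ?_⟩
    rcases Nat.le_succ_iff.1 hi with hi | rfl
    · rw [hqp i hi]
      exact (hpF i hi).2
    · rwa [hqx]

/-- If every vertex `y` has a set `A y` of at least five vertices, some `x ∈ A y` with `x ≠ y` is
the start of a path of length four to `y`. -/
theorem exists_path_four_of_family (hor : IsOriented G) {d : ℕ} (hd : Fintype.card V < 3 * d)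
    (hd3 : 3 ≤ d) (hout : ∀ x, d ≤ #(outNbrs G x)) (hin : ∀ x, d ≤ #(outNbrs (flip G) x))
    [Nonempty V] (A : V → Finset V) (hA : ∀ y, 5 ≤ #(A y)) :
    ∃ y, ∃ x ∈ A y, x ≠ y ∧ ∃ a b c, G x a ∧ G a b ∧ G b c ∧ G c y ∧ a ≠ y ∧ c ≠ x := by
  by_contra! h
  let X : V → V → Finset V := fun x y => (outNbrs G x).erase y
  let Y : V → V → Finset V := fun x y => (outNbrs (flip G) y).erase x
  let P₁ : Finset (V × V) := {e | ∀ u ∈ X e.1 e.2, ∀ v ∈ X e.1 e.2, ¬ G u v}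
  let P₂ : Finset (V × V) := {e | ∀ u ∈ Y e.1 e.2, ∀ v ∈ Y e.1 e.2, ¬ G u v}
  let P₃ : Finset (V × V) := {e | X e.1 e.2 = Y e.1 e.2 ∧ #(X e.1 e.2) < d}
  have hP₁ : #P₁ ≤ Fintype.card V := by
    refine card_le_card_of_injOn Prod.fst (fun _ _ => mem_univ _) ?_
    rintro ⟨x, y⟩ he ⟨x', y'⟩ he' hxx
    obtain rfl : x = x' := hxx
    simp only [P₁, coe_filter, mem_univ, true_and, Set.mem_ofPred_eq] at he he'
    rw [eq_of_erase_independent hor hd hd3 hout hin he he']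
  have hP₂ : #P₂ ≤ Fintype.card V := by
    refine card_le_card_of_injOn Prod.snd (fun _ _ => mem_univ _) ?_
    rintro ⟨x, y⟩ he ⟨x', y'⟩ he' hyy
    obtain rfl : y = y' := hyy
    simp only [P₂, coe_filter, mem_univ, true_and, Set.mem_ofPred_eq] at he he'
    rw [eq_of_erase_independent hor.flip hd hd3 hin hout
      (fun u hu v hv => he v hv u hu) (fun u hu v hv => he' v hv u hu)]
  have hP₃ : #P₃ ≤ Fintype.card V := by
    refine card_le_card_of_injOn Prod.fst (fun _ _ => mem_univ _) ?_
    rintro ⟨x, y⟩ he ⟨x', y'⟩ he' hxx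
    obtain rfl : x = x' := hxx
    simp only [P₃, coe_filter, mem_univ, true_and, Set.mem_ofPred_eq] at he he'
    have hmem : ∀ z, #(X x z) < d → z ∈ outNbrs G x := by
      intro z hz
      by_contra hzx
      have := hout x
      simp only [X, erase_eq_of_notMem hzx] at hz
      omega
    have hedge : ∀ z w, z ≠ w → X x z = Y x z → w ∈ outNbrs G x → G w z := by
      intro z w hzw heq hw
      have hmem' : w ∈ X x z := mem_erase.2 ⟨hzw.symm, hw⟩
      rw [heq] at hmem'
      exact (mem_outNbrs (G := flip G)).1 (mem_erase.1 hmem').2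
    by_contra hne
    have hyy : y ≠ y' := fun e => hne (by rw [e])
    exact hor y' y (hedge y y' hyy he.1 (hmem y' he'.2))
      (hedge y' y hyy.symm he'.1 (hmem y he.2))
  let Q : Finset (V × V) := {e | e.1 ∈ A e.2 ∧ e.1 ≠ e.2}
  have hQ : 4 * Fintype.card V ≤ #Q := by
    have hsub : (univ.sigma fun y => (A y).erase y).image
        (fun e : Σ _ : V, V => (e.2, e.1)) ⊆ Q := by
      intro e
      simp only [Q, mem_image, mem_sigma, mem_univ, true_and, mem_filter, mem_erase]
      rintro ⟨f, hf, rfl⟩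
      exact ⟨hf.2, hf.1⟩
    refine le_trans ?_ (card_le_card hsub)
    rw [card_image_of_injective, card_sigma]
    · have : ∀ y ∈ (univ : Finset V), 4 ≤ #((A y).erase y) := fun y _ => by
        have := hA y
        have := pred_card_le_card_erase (s := A y) (a := y)
        omega
      simpa [mul_comm] using card_nsmul_le_sum univ _ 4 this
    · rintro ⟨a, b⟩ ⟨a', b'⟩ hab
      simp only [Prod.mk.injEq] at hab
      rw [hab.1, hab.2]
  have hsub : Q ⊆ P₁ ∪ P₂ ∪ P₃ := by
    rintro ⟨x, y⟩ he
    simp only [Q, mem_filter, mem_univ, true_and] at he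
    by_contra hP
    simp only [P₁, P₂, P₃, mem_union, mem_filter, mem_univ, true_and, not_or, not_and, not_lt] at hP
    push Not at hP
    have hcardX : d ≤ #(X x y) + 1 := by
      have := hout x
      have : #(outNbrs G x) - 1 ≤ #(X x y) := pred_card_le_card_erase
      omega
    have hcardY : d ≤ #(Y x y) + 1 := by
      have := hin y
      have : #(outNbrs (flip G) y) - 1 ≤ #(Y x y) := pred_card_le_card_erase
      omega
    obtain ⟨a, ha, b, c, hc, hab, hbc⟩ := exists_path_two_between hor hd hout hin
      hcardX hcardY hP.1.1 hP.1.2 hP.2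
    rw [mem_erase, mem_outNbrs] at ha hc
    exact hc.1 (h y x he.1 he.2 a b c ha.2 hab hbc hc.2 ha.1)
  have h₁ := card_le_card hsub
  have h₂ := card_union_le (P₁ ∪ P₂) P₃
  have h₃ := card_union_le P₁ P₂
  have h₄ : 0 < Fintype.card V := Fintype.card_pos
  omega

theorem exists_edge_of_card (hor : IsOriented G) {d : ℕ} (hd : Fintype.card V < 3 * d)
    (hout : ∀ x, d ≤ #(outNbrs G x)) (hin : ∀ x, d ≤ #(outNbrs (flip G) x)) {Z : Finset V}
    (hZ : d ≤ #Z) : ∃ u ∈ Z, ∃ v ∈ Z, G u v := by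
  obtain ⟨v, hv⟩ : Z.Nonempty := card_pos.1 (by omega)
  obtain ⟨w, hw, hvw | hwv⟩ := exists_adj_of_card hor hd hout hin hZ v
  exacts [⟨v, hv, w, hw, hvw⟩, ⟨w, hw, v, hv, hwv⟩]

end ShortCycles

/-- For every ℓ ≥ 4 and n ≥ 10¹⁰·ℓ, every oriented graph on n vertices with minimum
semidegree at least ⌊n/3⌋ + 1 contains a directed cycle of length exactly ℓ. -/
theorem oriented_short_cycle (ℓ : ℕ) (hℓ : 4 ≤ ℓ)
    (V : Type) [Fintype V] (G : V → V → Prop)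
    (hor : IsOriented G)
    (hn : 10 ^ 10 * ℓ ≤ Fintype.card V)
    (hdeg : ∀ x : V, Fintype.card V / 3 + 1 ≤ outDeg G x ∧
      Fintype.card V / 3 + 1 ≤ inDeg G x) :
    ∃ g : ZMod ℓ → V, Function.Injective g ∧ ∀ i, G (g i) (g (i + 1)) := by
  classical
  set d := Fintype.card V / 3 + 1 with hd_def
  have hd : Fintype.card V < 3 * d := by omega
  have hout : ∀ x, d ≤ (outNbrs G x).card := fun x => outDeg_eq_card_outNbrs (G := G) x ▸ (hdeg x).1
  have hin : ∀ x, d ≤ (outNbrs (flip G) x).card :=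
    fun x => inDeg_eq_card_outNbrs_flip (G := G) x ▸ (hdeg x).2
  have : Nonempty V := Fintype.card_pos_iff.1 (by omega)
  obtain ⟨k, rfl⟩ := Nat.exists_eq_add_of_le' hℓ
  rcases k with _ | j
  · obtain ⟨x⟩ := this
    obtain ⟨a, ha, b, c, hc, hab, hbc⟩ := exists_path_two_between hor hd hout hin
      (le_add_right (hout x)) (le_add_right (hin x))
      (exists_edge_of_card hor hd hout hin (hout x))
      (exists_edge_of_card hor hd hout hin (hin x)) fun _ => hout x
    rw [mem_outNbrs] at ha hc
    have hp : IsDiPath G (fun _ => x) 0 :=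
      ⟨fun i hi => absurd hi (by omega), fun i hi j hj _ => by
        simp only [Set.mem_Iic] at hi hj
        omega⟩
    refine hp.exists_cycle_of_walk hor ha hab hbc hc fun _ _ => ⟨hor.ne ha, ?_, (hor.ne hc).symm⟩
    rintro rfl
    exact hor _ _ ha hab
  · obtain ⟨y, x, hx, hxy, a, b, c, ha, hab, hbc, hc, hay, hcx⟩ :=
      exists_path_four_of_family hor hd (by omega) hout hin
        (fun y => robustReach G (j + 5) y j) fun y => by
          have := card_le_six_mul_card_robustReach (G := G) (K := j + 5) hd (by omega) hout y j
          omega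
    have hbx : b ≠ x := fun h => hor x a ha (h ▸ hab)
    have hby : b ≠ y := fun h => hor b c hbc (h ▸ hc)
    obtain ⟨p, hp, hpy, hpx, hpF⟩ := exists_isDiPath_of_mem_robustReach hor hx hxy
      (F := {a, b, c}) (by have := Finset.card_le_three (a := a) (b := b) (c := c); omega)
      (by simpa using ⟨hor.ne ha, hbx.symm, hcx.symm⟩)
      (by simpa using ⟨hay.symm, hby.symm, (hor.ne hc).symm⟩)
    refine hp.exists_cycle_of_walk hor (hpx ▸ ha) hab hbc (hpy ▸ hc) fun i hi => ?_
    simpa using hpF i hi
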